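/- Let z₁ < ⋯ < z_K (K ≥ 2) be a grid with Cramér projection Π_C. Then Π_C is monotone with respect to stochastic dominance: for probability measures ν₁, ν₂ on ℝ, if ν₁ ≤ ν₂ (i.e. F_{ν₁}(y) ≥ F_{ν₂}(y) for all y ∈ ℝ), then Π_C ν₁ ≤ Π_C ν₂. -/

import Mathlib

open MeasureTheory Filter Set

noncomputable section

/-- The cumulative distribution function of a measure on ℝ. -/
def cdfFn (ν : Measure ℝ) (y : ℝ) : ℝ := (ν (Set.Iic y)).toReal

/-- The Cramér distance `ℓ₂` between two measures on ℝ. -/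
def cramerDist (ν₁ ν₂ : Measure ℝ) : ℝ :=
  Real.sqrt (∫ x, (cdfFn ν₁ x - cdfFn ν₂ x) ^ 2)

/-- The hat functions associated with the grid `z 0 < z 1 < ⋯ < z (K-1)`. -/
def hatFn (K : ℕ) (z : ℕ → ℝ) (i : ℕ) (x : ℝ) : ℝ :=
  if i = 0 ∧ x ≤ z 0 then 1
  else if i = K - 1 ∧ z (K - 1) ≤ x then 1
  else if i + 1 < K ∧ z i ≤ x ∧ x ≤ z (i + 1) then (z (i + 1) - x) / (z (i + 1) - z i)
  else if 0 < i ∧ z (i - 1) ≤ x ∧ x ≤ z i then (x - z (i - 1)) / (z i - z (i - 1))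
  else 0

/-- The Cramér projection onto the grid `z 0 < z 1 < ⋯ < z (K-1)`. -/
def cramerProj (K : ℕ) (z : ℕ → ℝ) (ν : Measure ℝ) : Measure ℝ :=
  ∑ i ∈ Finset.range K, (ENNReal.ofReal (∫ w, hatFn K z i w ∂ν)) • Measure.dirac (z i)

/-- The distributional Bellman operator. -/
def bellmanOp {X A : Type} [Fintype X] [Fintype A] [MeasurableSpace X] [MeasurableSpace A]
    (γ : ℝ) (p : X × A → Measure (ℝ × X)) (pol : X → Measure A)
    (η : X × A → Measure ℝ) (xa : X × A) : Measure ℝ :=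
  (p xa).bind (fun rx' => ∑ a' : A, (pol rx'.2 {a'}) • (η (rx'.2, a')).map (fun t => rx'.1 + γ * t))

/-- The supremum-Cramér metric between return distribution functions. -/
def supCramer {X A : Type} [Fintype X] [Fintype A] (η μ : X × A → Measure ℝ) : ℝ :=
  ⨆ xa : X × A, cramerDist (η xa) (μ xa)

/-- Square-integrable tails of the CDF. -/
def sqIntTails (ν : Measure ℝ) : Prop :=
  IntegrableOn (fun x => (cdfFn ν x) ^ 2) (Set.Iic 0) ∧
  IntegrableOn (fun x => (1 - cdfFn ν x) ^ 2) (Set.Ici 0)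

/-!
For `0 < n < K` the sum of the first `n` hats is a decreasing ramp: it is `1` up to `z (n - 1)`,
`0` from `z n` on and affine in between; for `n = K` it is `1`.
Hence the CDF of the projection of `ν` at `y` is the `ν`-integral of a nonnegative antitone function
that depends only on `y` and the grid. By the layer cake formula such an integral is an integral of
`ν`-measures of lower sets, and a lower set of a second-countable linear order is a countable
increasing union of sets `Iic y`.
-/

section StochasticDominance

variable {α : Type*} [TopologicalSpace α] [LinearOrder α] [OrderTopology α]
  [SecondCountableTopology α] [MeasurableSpace α] {μ ν : Measure α}

lemma measure_le_measure_of_isLowerSet (h : ∀ y, μ (Iic y) ≤ ν (Iic y)) {s : Set α}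
    (hs : IsLowerSet s) : μ s ≤ ν s := by
  have := hs.ordConnected
  have hmono : Monotone fun y : s ↦ Iic (y : α) := fun _ _ hab ↦ Iic_subset_Iic.2 hab
  have hunion : ⋃ y : s, Iic (y : α) = s :=
    Subset.antisymm (iUnion_subset fun y ↦ hs.Iic_subset y.2)
      fun x hx ↦ mem_iUnion.2 ⟨⟨x, hx⟩, self_mem_Iic⟩
  rw [← hunion, hmono.measure_iUnion, hmono.measure_iUnion]
  exact iSup_mono fun y ↦ h y

variable [BorelSpace α] {f : α → ℝ}

lemma lintegral_ofReal_le_of_antitone (h : ∀ y, μ (Iic y) ≤ ν (Iic y)) (hf : Antitone f)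
    (hf₀ : 0 ≤ f) : ∫⁻ x, ENNReal.ofReal (f x) ∂μ ≤ ∫⁻ x, ENNReal.ofReal (f x) ∂ν := by
  rw [lintegral_eq_lintegral_meas_le μ (ae_of_all _ hf₀) hf.measurable.aemeasurable,
    lintegral_eq_lintegral_meas_le ν (ae_of_all _ hf₀) hf.measurable.aemeasurable]
  exact lintegral_mono fun t ↦
    measure_le_measure_of_isLowerSet h fun _ _ hba ht ↦ le_trans ht (hf hba)

lemma integral_le_integral_of_antitone (h : ∀ y, μ (Iic y) ≤ ν (Iic y)) (hf : Antitone f)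
    (hf₀ : 0 ≤ f) (hfν : Integrable f ν) : ∫ x, f x ∂μ ≤ ∫ x, f x ∂ν := by
  rw [integral_eq_lintegral_of_nonneg_ae (ae_of_all _ hf₀) hf.measurable.aestronglyMeasurable,
    integral_eq_lintegral_of_nonneg_ae (ae_of_all _ hf₀) hf.measurable.aestronglyMeasurable]
  exact ENNReal.toReal_mono hfν.lintegral_lt_top.ne (lintegral_ofReal_le_of_antitone h hf hf₀)

end StochasticDominance

lemma exists_filter_range_eq_range {K : ℕ} {p : ℕ → Prop} [DecidablePred p]
    (hp : ∀ ⦃i j⦄, i ≤ j → j < K → p j → p i) :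
    ∃ n ≤ K, {i ∈ Finset.range K | p i} = Finset.range n := by
  have hex : ∃ n, K ≤ n ∨ ¬ p n := ⟨K, Or.inl le_rfl⟩
  refine ⟨Nat.find hex, Nat.find_min' hex (Or.inl le_rfl), Finset.ext fun i ↦ ?_⟩
  rw [Finset.mem_filter, Finset.mem_range, Finset.mem_range, Nat.lt_find_iff]
  refine ⟨fun ⟨hiK, hi⟩ m hmi ↦ ?_, fun h ↦ ?_⟩
  · exact not_or.2 ⟨by lia, not_not.2 (hp hmi hiK hi)⟩
  · simpa using h i le_rfl

/-- The continuous function that is `1` on `Iic a`, `0` on `Ici b` and affine in between,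
for `a < b`. -/
def ramp (a b x : ℝ) : ℝ := max 0 (min 1 ((b - x) / (b - a)))

section Ramp

variable {a b x : ℝ}

lemma ramp_nonneg (a b x : ℝ) : 0 ≤ ramp a b x := le_max_left _ _

lemma ramp_le_one (a b x : ℝ) : ramp a b x ≤ 1 := max_le zero_le_one (min_le_left _ _)

lemma antitone_ramp (hab : a < b) : Antitone (ramp a b) := fun x y hxy ↦ by
  have : 0 ≤ b - a := sub_nonneg.2 hab.le
  unfold ramp
  gcongr

lemma ramp_of_le (hab : a < b) (hx : x ≤ a) : ramp a b x = 1 := by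
  have : 1 ≤ (b - x) / (b - a) := (one_le_div (sub_pos.2 hab)).2 (by gcongr)
  simp [ramp, this]

lemma ramp_of_ge (hab : a < b) (hx : b ≤ x) : ramp a b x = 0 := by
  have : (b - x) / (b - a) ≤ 0 :=
    div_nonpos_of_nonpos_of_nonneg (sub_nonpos.2 hx) (sub_nonneg.2 hab.le)
  exact max_eq_left (min_le_of_right_le this)

lemma ramp_of_mem_Icc (hab : a < b) (hx : x ∈ Icc a b) :
    ramp a b x = (b - x) / (b - a) := by
  have h₀ : 0 ≤ (b - x) / (b - a) := div_nonneg (sub_nonneg.2 hx.2) (sub_nonneg.2 hab.le)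
  have h₁ : (b - x) / (b - a) ≤ 1 := (div_le_one (sub_pos.2 hab)).2 (by linarith [hx.1])
  rw [ramp, min_eq_right h₁, max_eq_right h₀]

lemma one_sub_ramp_of_mem_Icc (hab : a < b) (hx : x ∈ Icc a b) :
    1 - ramp a b x = (x - a) / (b - a) := by
  rw [ramp_of_mem_Icc hab hx, one_sub_div (sub_pos.2 hab).ne', sub_sub_sub_cancel_left]

end Ramp

section Hat

variable {K n i : ℕ} {z : ℕ → ℝ}

lemma hatFn_nonneg (K : ℕ) (z : ℕ → ℝ) (i : ℕ) (x : ℝ) : 0 ≤ hatFn K z i x := by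
  unfold hatFn
  split_ifs with _ _ hright hleft
  · exact zero_le_one
  · exact zero_le_one
  · exact div_nonneg (sub_nonneg.2 hright.2.2) (sub_nonneg.2 (hright.2.1.trans hright.2.2))
  · exact div_nonneg (sub_nonneg.2 hleft.2.1) (sub_nonneg.2 (hleft.2.1.trans hleft.2.2))
  · exact le_rfl

lemma hatFn_one_zero (z : ℕ → ℝ) (x : ℝ) : hatFn 1 z 0 x = 1 := by
  rcases le_total x (z 0) with hx | hx <;> simp [hatFn, hx]

lemma hatFn_zero (hK : 1 < K) (hz : z 0 < z 1) (x : ℝ) : hatFn K z 0 x = ramp (z 0) (z 1) x := by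
  have hlast : 0 ≠ K - 1 := by lia
  rcases le_or_gt x (z 0) with hx₀ | hx₀
  · simp [hatFn, hx₀, ramp_of_le hz hx₀]
  rcases le_or_gt x (z 1) with hx₁ | hx₁
  · simp [hatFn, hlast, hK, hx₀.not_ge, hx₀.le, hx₁, ramp_of_mem_Icc hz ⟨hx₀.le, hx₁⟩]
  · simp [hatFn, hlast, hx₀.not_ge, hx₁.not_ge, ramp_of_ge hz hx₁.le]

lemma hatFn_last (hz : z n < z (n + 1)) (x : ℝ) :
    hatFn (n + 2) z (n + 1) x = 1 - ramp (z n) (z (n + 1)) x := by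
  rcases le_or_gt (z (n + 1)) x with hx₁ | hx₁
  · simp [hatFn, hx₁, ramp_of_ge hz hx₁]
  rcases le_or_gt (z n) x with hx₀ | hx₀
  · simp [hatFn, hx₁.not_ge, hx₁.le, hx₀, one_sub_ramp_of_mem_Icc hz ⟨hx₀, hx₁.le⟩]
  · simp [hatFn, hx₁.not_ge, hx₀.not_ge, ramp_of_le hz hx₀.le]

lemma hatFn_succ (hK : n + 2 < K) (hz₀ : z n < z (n + 1)) (hz₁ : z (n + 1) < z (n + 2)) (x : ℝ) :
    hatFn K z (n + 1) x = ramp (z (n + 1)) (z (n + 2)) x - ramp (z n) (z (n + 1)) x := by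
  have hlast : n + 1 ≠ K - 1 := by lia
  rcases le_or_gt (z (n + 1)) x with hx₁ | hx₁
  · rw [ramp_of_ge hz₀ hx₁, sub_zero]
    rcases le_or_gt x (z (n + 2)) with hx₂ | hx₂
    · simp [hatFn, hlast, hK, hx₁, hx₂, ramp_of_mem_Icc hz₁ ⟨hx₁, hx₂⟩]
    · simp [hatFn, hlast, hx₂.not_ge, (hz₁.trans hx₂).not_ge, ramp_of_ge hz₁ hx₂.le]
  · rw [ramp_of_le hz₁ hx₁.le]
    rcases le_or_gt (z n) x with hx₀ | hx₀
    · simp [hatFn, hlast, hx₁.not_ge, hx₁.le, hx₀, one_sub_ramp_of_mem_Icc hz₀ ⟨hx₀, hx₁.le⟩]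
    · simp [hatFn, hlast, hx₁.not_ge, hx₀.not_ge, ramp_of_le hz₀ hx₀.le]

/-- The sum of the first `n ≤ K` hats, in closed form; `sum_range_hatFn` is the identity that
justifies the name. -/
def cumHat (K : ℕ) (z : ℕ → ℝ) : ℕ → ℝ → ℝ
  | 0 => 0
  | n + 1 => if n + 1 < K then ramp (z n) (z (n + 1)) else 1

lemma cumHat_nonneg (K : ℕ) (z : ℕ → ℝ) (n : ℕ) : 0 ≤ cumHat K z n := fun x ↦ by
  cases n with
  | zero => exact le_rfl
  | succ n =>
    rw [cumHat]
    split_ifs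
    exacts [ramp_nonneg _ _ _, zero_le_one]

lemma cumHat_le_one (K : ℕ) (z : ℕ → ℝ) (n : ℕ) (x : ℝ) : cumHat K z n x ≤ 1 := by
  cases n with
  | zero => exact zero_le_one
  | succ n =>
    rw [cumHat]
    split_ifs
    exacts [ramp_le_one _ _ _, le_rfl]

lemma antitone_cumHat (hz : StrictMonoOn z (Iio K)) (n : ℕ) : Antitone (cumHat K z n) := by
  cases n with
  | zero => exact antitone_const
  | succ n =>
    rw [cumHat]
    split_ifs with hn
    · exact antitone_ramp (hz (n.lt_succ_self.trans hn) hn n.lt_succ_self)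
    · exact antitone_const

lemma hatFn_eq_cumHat_sub_cumHat (hz : StrictMonoOn z (Iio K)) (hi : i < K) (x : ℝ) :
    hatFn K z i x = cumHat K z (i + 1) x - cumHat K z i x := by
  have hlt {j : ℕ} (hj : j + 1 < K) : z j < z (j + 1) :=
    hz (j.lt_succ_self.trans hj) hj j.lt_succ_self
  cases i with
  | zero =>
    obtain rfl | hK := (Nat.succ_le_of_lt hi).eq_or_lt
    · simp [cumHat, hatFn_one_zero]
    · simp [cumHat, hK, hatFn_zero hK (hlt hK)]
  | succ i =>
    obtain rfl | hK := (Nat.succ_le_of_lt hi).eq_or_lt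
    · simp [cumHat, hatFn_last (hlt hi)]
    · simp [cumHat, hi, hK, hatFn_succ hK (hlt hi) (hlt hK)]

lemma sum_range_hatFn (hz : StrictMonoOn z (Iio K)) (hn : n ≤ K) (x : ℝ) :
    ∑ i ∈ Finset.range n, hatFn K z i x = cumHat K z n x := by
  rw [Finset.sum_congr rfl fun i hi ↦
      hatFn_eq_cumHat_sub_cumHat hz ((Finset.mem_range.1 hi).trans_le hn) x,
    Finset.sum_range_sub (cumHat K z · x)]
  exact sub_zero _

lemma integrable_cumHat (hz : StrictMonoOn z (Iio K)) (n : ℕ) (ν : Measure ℝ)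
    [IsFiniteMeasure ν] : Integrable (cumHat K z n) ν :=
  .of_bound (antitone_cumHat hz n).measurable.aestronglyMeasurable 1 <| ae_of_all _ fun x ↦ by
    simpa [abs_of_nonneg (cumHat_nonneg K z n x)] using cumHat_le_one K z n x

lemma integrable_hatFn (hz : StrictMonoOn z (Iio K)) (hi : i < K) (ν : Measure ℝ)
    [IsFiniteMeasure ν] : Integrable (hatFn K z i) ν :=
  ((integrable_cumHat hz (i + 1) ν).sub (integrable_cumHat hz i ν)).congr <|
    ae_of_all _ fun x ↦ (hatFn_eq_cumHat_sub_cumHat hz hi x).symm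

end Hat

lemma measure_Iic_le_of_cdfFn_le {μ ν : Measure ℝ} [IsFiniteMeasure μ] [IsFiniteMeasure ν] {y : ℝ}
    (h : cdfFn μ y ≤ cdfFn ν y) : μ (Iic y) ≤ ν (Iic y) :=
  (ENNReal.toReal_le_toReal (measure_ne_top _ _) (measure_ne_top _ _)).1 h

lemma cramerProj_apply (K : ℕ) (z : ℕ → ℝ) (ν : Measure ℝ) (s : Set ℝ) [DecidablePred (· ∈ s)] :
    cramerProj K z ν s =
      ∑ i ∈ Finset.range K with z i ∈ s, ENNReal.ofReal (∫ x, hatFn K z i x ∂ν) := by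
  simp [cramerProj, Measure.finsetSum_apply, Finset.sum_filter, indicator_apply]

lemma cdfFn_cramerProj (K : ℕ) (z : ℕ → ℝ) (ν : Measure ℝ) (y : ℝ) :
    cdfFn (cramerProj K z ν) y =
      ∑ i ∈ Finset.range K with z i ≤ y, ∫ x, hatFn K z i x ∂ν := by
  have hnonneg (i : ℕ) : 0 ≤ ∫ x, hatFn K z i x ∂ν := integral_nonneg (hatFn_nonneg K z i)
  simp only [cdfFn, cramerProj_apply, mem_Iic]
  rw [← ENNReal.ofReal_sum_of_nonneg fun i _ ↦ hnonneg i,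
    ENNReal.toReal_ofReal (Finset.sum_nonneg fun i _ ↦ hnonneg i)]

lemma exists_cdfFn_cramerProj_eq_integral_cumHat {K : ℕ} {z : ℕ → ℝ}
    (hz : StrictMonoOn z (Iio K)) (y : ℝ) :
    ∃ n, ∀ (ν : Measure ℝ) [IsFiniteMeasure ν],
      cdfFn (cramerProj K z ν) y = ∫ x, cumHat K z n x ∂ν := by
  obtain ⟨n, hnK, hn⟩ := exists_filter_range_eq_range (K := K) (p := (z · ≤ y))
    fun i j hij hj hy ↦ (hz.monotoneOn (hij.trans_lt hj) hj hij).trans hy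
  refine ⟨n, fun ν _ ↦ ?_⟩
  rw [cdfFn_cramerProj, hn, ← integral_finsetSum _ fun i hi ↦
    integrable_hatFn hz ((Finset.mem_range.1 hi).trans_le hnK) ν]
  simp only [sum_range_hatFn hz hnK]

theorem cramerProj_monotone_general
    (K : ℕ) (z : ℕ → ℝ) (hz : ∀ i, i + 1 < K → z i < z (i + 1))
    (ν₁ ν₂ : Measure ℝ) [IsFiniteMeasure ν₁] [IsFiniteMeasure ν₂]
    (hdom : ∀ y : ℝ, cdfFn ν₂ y ≤ cdfFn ν₁ y) :
    ∀ y : ℝ, cdfFn (cramerProj K z ν₂) y ≤ cdfFn (cramerProj K z ν₁) y := by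
  intro y
  have hmono : StrictMonoOn z (Iio K) :=
    strictMonoOn_of_lt_add_one ordConnected_Iio fun i _ _ hi ↦ hz i hi
  obtain ⟨n, hn⟩ := exists_cdfFn_cramerProj_eq_integral_cumHat hmono y
  rw [hn ν₁, hn ν₂]
  exact integral_le_integral_of_antitone (fun t ↦ measure_Iic_le_of_cdfFn_le (hdom t))
    (antitone_cumHat hmono n) (cumHat_nonneg K z n) (integrable_cumHat hmono n ν₁)

/-- The Cramér projection is monotone with respect to stochastic dominance. -/
theorem cramerProj_monotone
    (K : ℕ) (hK : 2 ≤ K) (z : ℕ → ℝ) (hz : ∀ i, i + 1 < K → z i < z (i + 1))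
    (ν₁ ν₂ : Measure ℝ) [IsProbabilityMeasure ν₁] [IsProbabilityMeasure ν₂]
    (hdom : ∀ y : ℝ, cdfFn ν₂ y ≤ cdfFn ν₁ y) :
    ∀ y : ℝ, cdfFn (cramerProj K z ν₂) y ≤ cdfFn (cramerProj K z ν₁) y :=
  cramerProj_monotone_general K z hz ν₁ ν₂ hdom

end
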